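/- Let G be a finite group and A a noncyclic abelian group acting on G with (|A|,|G|)=1. Then G is generated by the fixed-point subgroups C_G(B), where B ranges over the subgroups of A such that A/B is cyclic. -/

import Mathlib

open MulAction

theorem perm_fix {A α : Type*} [Group A] [MulAction A α] (X : Set α) [Finite X] (a : A) (q : ℕ)
    (hq : q.Prime) (h1 : ∀ x, a • x ∈ X ↔ x ∈ X) (h2 : ∀ x ∈ X, a ^ q • x = x)
    (h3 : ¬ q ∣ Nat.card X) : ∃ x ∈ X, a • x = x := by
  classical
  have : Fact q.Prime := ⟨hq⟩
  have := Fintype.ofFinite X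
  let σ : Equiv.Perm X := (MulAction.toPerm a : Equiv.Perm α).subtypePerm h1
  have hσ : σ ^ q ^ 1 = 1 := by
    rw [pow_one]
    ext x
    have hk : ∀ (k : ℕ) (y : X), ((σ ^ k) y : α) = a ^ k • (y : α) := by
      intro k
      induction k with
      | zero => intro y; simp
      | succ k ihk =>
        intro y
        rw [pow_succ, Equiv.Perm.mul_apply, ihk, pow_succ, mul_smul]
        rfl
    rw [hk, h2 x x.2]
    rfl
  rw [Nat.card_eq_fintype_card] at h3
  obtain ⟨x, hx⟩ := Equiv.Perm.exists_fixed_point_of_prime h3 hσ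
  refine ⟨x, x.2, ?_⟩
  exact congrArg Subtype.val hx

theorem glauberman {A G Ω : Type*} [CommGroup A] [Finite A] [Group G] [Finite G]
    [MulDistribMulAction A G] [MulAction G Ω] [MulAction A Ω] [Nonempty Ω] [IsPretransitive G Ω]
    (hcop : Nat.Coprime (Nat.card A) (Nat.card G))
    (compat : ∀ (a : A) (g : G) (ω : Ω), a • (g • ω) = (a • g) • (a • ω)) :
    ∃ ω : Ω, ∀ a : A, a • ω = ω := by
  classical
  let P : Subgroup A → Prop := fun C => (∃ ω : Ω, C ≤ stabilizer A ω) ∧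
    ∀ ω ω' : Ω, C ≤ stabilizer A ω → C ≤ stabilizer A ω' →
      ∃ g : G, C ≤ stabilizer A g ∧ g • ω = ω'
  have hbot : P ⊥ := ⟨⟨Classical.arbitrary Ω, bot_le⟩, fun ω ω' _ _ => by
    obtain ⟨g, hg⟩ := exists_smul_eq G ω ω'
    exact ⟨g, bot_le, hg⟩⟩
  obtain ⟨C, hC⟩ := Set.Finite.exists_maximal (Set.toFinite {C | P C}) ⟨⊥, hbot⟩
  have hPC : P C := hC.1
  by_cases hT : C = ⊤
  · obtain ⟨ω, hω⟩ := hPC.1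
    exact ⟨ω, fun a => hω (hT ▸ Subgroup.mem_top a)⟩
  exfalso
  have hne : Nat.card (A ⧸ C) ≠ 1 := by
    rw [← Subgroup.index_eq_card]; simpa using hT
  obtain ⟨q, hq, hqd⟩ := Nat.exists_prime_and_dvd hne
  have : Fact q.Prime := ⟨hq⟩
  obtain ⟨x, hx⟩ := exists_prime_orderOf_dvd_card' q hqd
  obtain ⟨a, rfl⟩ := QuotientGroup.mk_surjective x
  have haC : a ∉ C := by
    intro h
    rw [(QuotientGroup.eq_one_iff a).2 h, orderOf_one] at hx
    exact hq.one_lt.ne hx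
  have haq : a ^ q ∈ C := by
    rw [← QuotientGroup.eq_one_iff, QuotientGroup.mk_pow, ← hx, pow_orderOf_eq_one]
  have hqG : ∀ n, n ∣ Nat.card G → ¬ q ∣ n := fun n hn h =>
    hq.one_lt.ne' (Nat.eq_one_of_dvd_coprimes hcop
      (hqd.trans (Subgroup.card_quotient_dvd_card C)) (h.trans hn))
  have key : P (C ⊔ Subgroup.zpowers a) := by
    have hst : ∀ {β : Type _} [MulAction A β] (b : β), C ≤ stabilizer A (a • b) ↔
        C ≤ stabilizer A b := by
      intro β _ b
      constructor <;> intro h c hc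
      · have := h hc
        rw [mem_stabilizer_iff, smul_smul, mul_comm, mul_smul] at this
        exact smul_left_cancel a this
      · have := h hc
        rw [mem_stabilizer_iff] at this ⊢
        rw [smul_smul, mul_comm, mul_smul, this]
    have hstG : ∀ (b : G), C ≤ stabilizer A (a • b) ↔
        C ≤ stabilizer A b := by
      intro b
      constructor <;> intro h c hc
      · have := h hc
        rw [mem_stabilizer_iff, smul_smul, mul_comm, mul_smul] at this
        exact smul_left_cancel a this
      · have := h hc
        rw [mem_stabilizer_iff] at this ⊢
        rw [smul_smul, mul_comm, mul_smul, this]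
    let K : Subgroup G :=
      { carrier := {g | C ≤ stabilizer A g}
        one_mem' := fun c _ => smul_one c
        mul_mem' := fun {g h} hg hh c hc => by
          have h1 := hg hc
          have h2 := hh hc
          rw [mem_stabilizer_iff] at *
          rw [smul_mul', h1, h2]
        inv_mem' := fun {g} hg c hc => by
          have h1 := hg hc
          rw [mem_stabilizer_iff] at *
          rw [smul_inv', h1] }
    refine ⟨?_, ?_⟩
    · obtain ⟨ω, hω⟩ := hPC.1
      have hX : ∀ x, x ∈ orbit K ω ↔ C ≤ stabilizer A x := by
        intro x
        constructor
        · rintro ⟨⟨k, hk⟩, rfl⟩ c hc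
          have h1 := hω hc
          have h2 := hk hc
          rw [mem_stabilizer_iff] at *
          change c • k • ω = k • ω
          rw [compat, h1, h2]
        · intro hx
          obtain ⟨g, hg, h⟩ := hPC.2 ω x hω hx
          exact ⟨⟨g, hg⟩, h⟩
      have : Finite (orbit K ω) := Set.finite_range _
      obtain ⟨x, hx, hax⟩ := perm_fix (orbit K ω) a q hq
        (fun x => by rw [hX, hX, hst]) (fun x hx => (hX x).1 hx haq) (hqG _ (by
          rw [Nat.card_congr (orbitEquivQuotientStabilizer K ω)]
          exact (Subgroup.card_quotient_dvd_card _).trans (Subgroup.card_subgroup_dvd_card K)))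
      exact ⟨x, sup_le ((hX x).1 hx) (by simpa using hax)⟩
    · intro ω ω' h h'
      have hω := le_sup_left.trans h
      have hω' := le_sup_left.trans h'
      have ha : a • ω = ω := h (Subgroup.mem_sup_right (Subgroup.mem_zpowers a))
      have ha' : a • ω' = ω' := h' (Subgroup.mem_sup_right (Subgroup.mem_zpowers a))
      obtain ⟨g, hg, hgω⟩ := hPC.2 ω ω' hω hω'
      let S : Subgroup G := K ⊓ stabilizer G ω
      let Y : Set G := (fun s => g * s) '' (S : Set G)
      have hY : ∀ y, y ∈ Y ↔ C ≤ stabilizer A y ∧ y • ω = ω' := by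
        intro y
        constructor
        · rintro ⟨s, ⟨hs1, hs2⟩, rfl⟩
          refine ⟨K.mul_mem hg hs1, ?_⟩
          change (g * s) • ω = ω'
          rw [mul_smul, (hs2 : s • ω = ω), hgω]
        · rintro ⟨h1, h2⟩
          refine ⟨g⁻¹ * y, ⟨K.mul_mem (K.inv_mem hg) h1, ?_⟩, by simp⟩
          change (g⁻¹ * y) • ω = ω
          rw [mul_smul, h2, ← hgω, inv_smul_smul]
      obtain ⟨y, hy, hay⟩ := perm_fix Y a q hq (fun y => by
          rw [hY, hY, hstG]
          refine and_congr_right fun _ => ?_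
          have := compat a y ω
          rw [ha] at this
          rw [← this]
          constructor
          · intro h
            exact smul_left_cancel a (h.trans ha'.symm)
          · intro h
            rw [h, ha']) (fun y hy => ((hY y).1 hy).1 haq) (hqG _ (by
          rw [Nat.card_image_of_injective (mul_right_injective g)]
          exact Subgroup.card_subgroup_dvd_card S))
      exact ⟨y, sup_le ((hY y).1 hy).1 (by simpa using hay), ((hY y).1 hy).2⟩
  exact haC (hC.2 key le_sup_left (Subgroup.mem_sup_right (Subgroup.mem_zpowers a)))

def genSet (A G : Type*) [CommGroup A] [Group G] [MulDistribMulAction A G] : Set G :=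
  {g : G | ∃ B : Subgroup A, IsCyclic (A ⧸ B) ∧ ∀ b ∈ B, b • g = g}

@[reducible] def subAct {A G : Type*} [CommGroup A] [Group G] [MulDistribMulAction A G]
    (H : Subgroup G) (hH : ∀ a : A, ∀ h ∈ H, a • h ∈ H) : MulDistribMulAction A H where
  smul a h := ⟨a • (h : G), hH a h h.2⟩
  one_smul h := Subtype.ext (one_smul A (h : G))
  mul_smul a b h := Subtype.ext (mul_smul a b (h : G))
  smul_one a := Subtype.ext (smul_one a)
  smul_mul a g h := Subtype.ext (smul_mul' a (g : G) (h : G))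

@[reducible] def quotAct {A G : Type*} [CommGroup A] [Group G] [MulDistribMulAction A G]
    (N : Subgroup G) [N.Normal] (hN : ∀ a : A, ∀ h ∈ N, a • h ∈ N) :
    MulDistribMulAction A (G ⧸ N) where
  smul a x := QuotientGroup.map N N (MulDistribMulAction.toMonoidHom G a) (fun h hh => hN a h hh) x
  one_smul x := by
    obtain ⟨x, rfl⟩ := QuotientGroup.mk_surjective x
    exact congrArg QuotientGroup.mk (one_smul A x)
  mul_smul a b x := by
    obtain ⟨x, rfl⟩ := QuotientGroup.mk_surjective x
    exact congrArg QuotientGroup.mk (mul_smul a b x)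
  smul_one a := map_one _
  smul_mul a g h := map_mul _ _ _

theorem cyclic_of_ring {A S : Type*} [Group A] [Finite A] [Ring S] [Nontrivial S] (f : A →* S)
    (hinj : Function.Injective f)
    (hcomm : ∀ x ∈ Set.range f, ∀ y ∈ Set.range f, x * y = y * x)
    (hdom : ∀ r ∈ Subring.closure (Set.range f), ∀ s ∈ Subring.closure (Set.range f),
      r * s = 0 → r = 0 ∨ s = 0) : IsCyclic A := by
  have hR : ∀ a, f a ∈ Subring.closure (Set.range f) := fun a => Subring.subset_closure ⟨a, rfl⟩
  have hm := Subring.isMulCommutative_closure hcomm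
  generalize Subring.closure (Set.range f) = R at *
  let _ : CommRing R :=
    { (inferInstance : Ring R) with
      mul_comm := hm.is_comm.comm }
  have : NoZeroDivisors R := ⟨fun {r s} hrs =>
    (hdom r r.2 s s.2 (congrArg Subtype.val hrs)).imp (fun h => Subtype.ext h)
      (fun h => Subtype.ext h)⟩
  have : IsDomain R := NoZeroDivisors.to_isDomain _
  let F : A →* R :=
    { toFun := fun a => ⟨f a, hR a⟩
      map_one' := Subtype.ext (map_one f)
      map_mul' := fun a b => Subtype.ext (map_mul f a b) }
  exact isCyclic_of_injective_ringHom (f := F)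
    (fun a b h => hinj (congrArg Subtype.val h))

theorem irred_case {A G : Type*} [CommGroup A] [Finite A] [CommGroup G] [Nontrivial G]
    [MulDistribMulAction A G]
    (hirr : ∀ H : Subgroup G, (∀ a : A, ∀ h ∈ H, a • h ∈ H) → H = ⊥ ∨ H = ⊤) :
    ∃ B : Subgroup A, IsCyclic (A ⧸ B) ∧ ∀ b ∈ B, ∀ g : G, b • g = g := by
  let f : A →* AddMonoid.End (Additive G) :=
    { toFun := fun a => (MulDistribMulAction.toMonoidHom G a).toAdditive
      map_one' := by ext x; exact one_smul A (x.toMul)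
      map_mul' := fun a b => by ext x; exact mul_smul a b (x.toMul) }
  have hf : ∀ a (x : Additive G), f a x = Additive.ofMul (a • x.toMul) := fun a x => rfl
  clear_value f
  have hc : ∀ r ∈ Subring.closure (Set.range f), ∀ a, r * f a = f a * r := by
    intro r hr a
    have h : Subring.closure (Set.range f) ≤ Subring.centralizer {f a} := by
      rw [Subring.closure_le]
      rintro _ ⟨b, rfl⟩ _ rfl
      rw [← map_mul, mul_comm, map_mul]
    exact (h hr (f a) rfl).symm
  have hker : ∀ r ∈ Subring.closure (Set.range f), r ≠ 0 → ∀ x : Additive G, r x = 0 → x = 0 := by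
    intro r hrR hr x hx
    let H : Subgroup G := (AddMonoidHom.toMultiplicative r : G →* G).ker
    have hH : ∀ x : Additive G, x.toMul ∈ H ↔ r x = 0 := fun x => Iff.rfl
    rcases hirr H (by
      intro a h hh
      have h1 := (hH (Additive.ofMul h)).1 hh
      refine (hH (Additive.ofMul (a • h))).2 ?_
      have h4 := DFunLike.congr_fun (hc r hrR a) (Additive.ofMul h)
      change r (f a (Additive.ofMul h)) = f a (r (Additive.ofMul h)) at h4
      rw [h1, map_zero, hf] at h4
      exact h4) with h | h
    · have := (hH x).2 hx
      rw [h] at this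
      exact this
    · exfalso
      apply hr
      ext x
      exact (hH x).1 (h ▸ Subgroup.mem_top _)
  have : Nontrivial (AddMonoid.End (Additive G)) := by
    refine ⟨0, 1, fun h => ?_⟩
    obtain ⟨g, hg⟩ := exists_ne (1 : G)
    have := DFunLike.congr_fun h (Additive.ofMul g)
    exact hg (this.symm)
  let F : A ⧸ f.ker →* AddMonoid.End (Additive G) := QuotientGroup.lift f.ker f (fun _ h => h)
  have hF : ∀ a : A, F (a : A ⧸ f.ker) = f a := fun a => rfl
  have hFinj : Function.Injective F := by
    rw [injective_iff_map_eq_one]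
    intro a ha
    obtain ⟨a, rfl⟩ := QuotientGroup.mk_surjective a
    exact (QuotientGroup.eq_one_iff a).2 ha
  clear_value F
  have hrange : Set.range F = Set.range f := by
    ext x
    constructor
    · rintro ⟨a, rfl⟩
      obtain ⟨a, rfl⟩ := QuotientGroup.mk_surjective a
      exact ⟨a, (hF a).symm⟩
    · rintro ⟨a, rfl⟩
      exact ⟨a, hF a⟩
  have hcyc : IsCyclic (A ⧸ f.ker) := by
    refine cyclic_of_ring F hFinj ?_ ?_
    · rw [hrange]
      rintro _ ⟨a, rfl⟩ _ ⟨b, rfl⟩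
      rw [← map_mul, mul_comm, map_mul]
    · rw [hrange]
      intro r hr s hs hrs
      by_contra! hh
      apply hh.2
      ext x
      exact hker r hr hh.1 _ (DFunLike.congr_fun hrs x)
  refine ⟨f.ker, hcyc, fun b hb g => ?_⟩
  have hb : f b = 1 := hb
  have h := hf b (Additive.ofMul g)
  rw [hb] at h
  exact h.symm

theorem main_aux (A : Type) [CommGroup A] [Finite A] (n : ℕ) : ∀ (G : Type) [Group G] [Finite G]
    [MulDistribMulAction A G], Nat.card G = n → Nat.Coprime (Nat.card A) (Nat.card G) →
    Subgroup.closure (genSet A G) = ⊤ := by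
  induction n using Nat.strong_induction_on with | _ n ih =>
  rintro G _ _ _ rfl hcop
  -- proper invariant subgroups are contained in the closure
  have hsub : ∀ H : Subgroup G, (∀ a : A, ∀ h ∈ H, a • h ∈ H) → H ≠ ⊤ →
      H ≤ Subgroup.closure (genSet A G) := by
    intro H hH hT
    let := subAct H hH
    have hlt : Nat.card H < Nat.card G := by
      rw [← H.index_mul_card]
      exact lt_mul_of_one_lt_left Nat.card_pos (Subgroup.one_lt_index_of_ne_top hT)
    have := ih _ hlt H rfl (hcop.coprime_dvd_right H.card_subgroup_dvd_card)
    have h2 : (Subgroup.closure (genSet A H)).map H.subtype = H := by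
      rw [this, ← MonoidHom.range_eq_map, H.range_subtype]
    rw [MonoidHom.map_closure] at h2
    conv_lhs => rw [← h2]
    apply Subgroup.closure_mono
    rintro _ ⟨h, ⟨B, hB, hb⟩, rfl⟩
    exact ⟨B, hB, fun b hbB => congrArg Subtype.val (hb b hbB)⟩
  -- proper nontrivial normal invariant subgroup
  have hnorm : ∀ N : Subgroup G, N.Normal → (∀ a : A, ∀ h ∈ N, a • h ∈ N) → N ≠ ⊥ → N ≠ ⊤ →
      Subgroup.closure (genSet A G) = ⊤ := by
    intro N _ hN hbot hT
    have hle := hsub N hN hT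
    let := quotAct N hN
    have hlt : Nat.card (G ⧸ N) < Nat.card G := by
      rw [← Subgroup.index_eq_card, ← N.index_mul_card]
      exact lt_mul_of_one_lt_right (Nat.pos_of_ne_zero Subgroup.index_ne_zero_of_finite)
        (N.one_lt_card_iff_ne_bot.mpr hbot)
    have h1 := ih _ hlt (G ⧸ N) rfl (hcop.coprime_dvd_right N.card_quotient_dvd_card)
    have h2 : genSet A (G ⧸ N) ⊆ (Subgroup.closure (genSet A G)).map (QuotientGroup.mk' N) := by
      rintro x ⟨B, hB, hx⟩
      obtain ⟨g, rfl⟩ := QuotientGroup.mk_surjective x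
      let Ω := {y : G // (y : G ⧸ N) = (g : G ⧸ N)}
      let : MulDistribMulAction B N := subAct N (fun a h hh => hN a h hh)
      let : MulAction B Ω :=
        { smul := fun b y => ⟨(b : A) • (y : G), by
            have := hx b b.2
            rw [← y.2] at this
            exact this.trans y.2⟩
          one_smul := fun y => Subtype.ext (one_smul A (y : G))
          mul_smul := fun a b y => Subtype.ext (mul_smul (a : A) (b : A) (y : G)) }
      let : MulAction N Ω :=
        { smul := fun b y => ⟨(b : G) * (y : G), by
            rw [QuotientGroup.mk_mul, (QuotientGroup.eq_one_iff (b : G)).2 b.2, one_mul, y.2]⟩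
          one_smul := fun y => Subtype.ext (one_mul (y : G))
          mul_smul := fun a b y => Subtype.ext (mul_assoc (a : G) (b : G) (y : G)) }
      have : Nonempty Ω := ⟨⟨g, rfl⟩⟩
      have : IsPretransitive N Ω := ⟨fun y z => by
        refine ⟨⟨z * (y : G)⁻¹, ?_⟩, Subtype.ext (inv_mul_cancel_right (z : G) (y : G))⟩
        rw [← QuotientGroup.eq_one_iff, QuotientGroup.mk_mul, QuotientGroup.mk_inv, y.2, z.2,
          mul_inv_cancel]⟩
      obtain ⟨ω, hω⟩ := glauberman (A := B) (G := N) (Ω := Ω)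
        ((hcop.coprime_dvd_left B.card_subgroup_dvd_card).coprime_dvd_right
          N.card_subgroup_dvd_card)
        (fun a g ω => Subtype.ext (smul_mul' (a : A) (g : G) (ω : G)))
      exact ⟨ω, Subgroup.subset_closure ⟨B, hB, fun b hb => congrArg Subtype.val (hω ⟨b, hb⟩)⟩,
        ω.2⟩
    rw [← Subgroup.closure_le, h1, top_le_iff] at h2
    have h3 := congrArg (Subgroup.comap (QuotientGroup.mk' N)) h2
    rw [Subgroup.comap_map_eq, QuotientGroup.ker_mk', sup_eq_left.2 hle, Subgroup.comap_top] at h3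
    exact h3
  by_contra hcon
  -- every invariant Sylow exists
  have hsyl : ∀ p : ℕ, p.Prime → ∃ P : Sylow p G, ∀ a : A, ∀ h ∈ P, a • h ∈ P := by
    intro p hp
    have : Fact p.Prime := ⟨hp⟩
    obtain ⟨P, hP⟩ := glauberman (A := A) (G := G) (Ω := Sylow p G) hcop (by
      intro a g P
      apply Sylow.ext
      simp only [Sylow.smul_def, Sylow.pointwise_smul_def]
      ext x
      simp only [Subgroup.mem_pointwise_smul_iff_inv_smul_mem, ← map_inv, MulAut.smul_def,
        MulAut.conj_apply, smul_mul', smul_inv']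
      simp)
    refine ⟨P, fun a h hh => ?_⟩
    have := Subgroup.smul_mem_pointwise_smul h a (P : Subgroup G) hh
    rw [← Sylow.pointwise_smul_def, hP a] at this
    exact this
  -- some Sylow is everything
  have hex : ∃ p : ℕ, p.Prime ∧ IsPGroup p G := by
    by_contra! hno
    apply hcon
    rw [← Subgroup.index_eq_one]
    by_contra hne
    obtain ⟨p, hp, hpd⟩ := Nat.exists_prime_and_dvd hne
    have : Fact p.Prime := ⟨hp⟩
    obtain ⟨P, hP⟩ := hsyl p hp
    have hPT : (P : Subgroup G) ≠ ⊤ := by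
      intro h
      have := P.isPGroup'
      rw [h] at this
      exact hno p hp (this.of_equiv Subgroup.topEquiv)
    exact P.not_dvd_index (hpd.trans (Subgroup.index_dvd_of_le (hsub P hP hPT)))
  obtain ⟨p, hp, hpG⟩ := hex
  have : Fact p.Prime := ⟨hp⟩
  rcases subsingleton_or_nontrivial G with hs | hnt
  · exact hcon (Subsingleton.elim _ _)
  have hcen : Subgroup.center G = ⊤ := by
    by_contra hT
    refine hcon (hnorm (Subgroup.center G) inferInstance ?_ hpG.bot_lt_center.ne' hT)
    intro a h hh
    rw [Subgroup.mem_center_iff] at *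
    intro g
    have := congrArg (a • ·) (hh (a⁻¹ • g))
    simpa [smul_mul'] using this
  let : CommGroup G := Group.commGroupOfCenterEqTop hcen
  obtain ⟨B, hB, hb⟩ := irred_case (A := A) (G := G) (fun H hH => by
    by_contra! hh
    exact hcon (hnorm H inferInstance hH hh.1 hh.2))
  exact hcon (eq_top_iff.2 fun g _ => Subgroup.subset_closure ⟨B, hB, fun b hbB => hb b hbB g⟩)

/-- If a noncyclic abelian group `A` acts coprimely on a finite group `G`,
then `G` is generated by the fixed-point subgroups `C_G(B)` where `A/B` is cyclic. -/
theorem coprime_noncyclic_abelian_generation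
    (G A : Type) [Group G] [Finite G] [CommGroup A] [Finite A]
    (hA : ¬ IsCyclic A)
    (φ : A →* MulAut G)
    (hcop : Nat.Coprime (Nat.card A) (Nat.card G)) :
    Subgroup.closure {g : G | ∃ B : Subgroup A, IsCyclic (A ⧸ B) ∧ ∀ b ∈ B, φ b g = g} = ⊤ := by
  let : MulDistribMulAction A G := MulDistribMulAction.compHom G φ
  exact main_aux A _ G rfl hcop
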